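/- Let X and Y be smooth projective varieties of dimension n over a field k, and let φ: X ⇢ Y be a birational isomorphism represented by an isomorphism U → V such that Z := X∖U has dimension at most n−1−ℓ and E := Y∖V is a Zariski-locally trivial ℙ^ℓ-bundle over Z for some ℓ ≥ 1. Then φ is convenient: [X∖U] − [Y∖V] lies in the image of multiplication by L : K_0(V_k^{(n−2)}) → K_0(V_k^{(n−1)}). -/

import Mathlib

open AlgebraicGeometry CategoryTheory CategoryTheory.Limits

noncomputable section

universe u

/-- A variety over a field `k`: a reduced separated scheme of finite type over `Spec k`. -/
structure Variety (k : Type u) [Field k] : Type (u + 1) where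
  /-- the underlying scheme -/
  toScheme : Scheme.{u}
  /-- the structure morphism to `Spec k` -/
  str : toScheme ⟶ Spec (CommRingCat.of k)
  reduced : IsReduced toScheme
  separated : IsSeparated str
  locallyOfFiniteType : LocallyOfFiniteType str
  quasiCompact : QuasiCompact str

namespace Variety

variable {k : Type u} [Field k]

/-- The dimension of a variety, i.e. the Krull dimension of its underlying space. -/
def dim (V : Variety k) : WithBot ℕ∞ := topologicalKrullDim V.toScheme

/-- `W` together with (implicitly) its two projections is a product of `X` and `Y`
over `k`, i.e. `W ≅ X ×ₖ Y`. -/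
def IsProductOf (W X Y : Variety k) : Prop :=
  ∃ e : W.toScheme ≅ Limits.pullback X.str Y.str,
    e.hom ≫ Limits.pullback.fst X.str Y.str ≫ X.str = W.str

/-- `A` is the affine line `𝔸¹` over `k`. -/
def IsAffLine (A : Variety k) : Prop :=
  ∃ e : A.toScheme ≅ Spec (CommRingCat.of (Polynomial k)),
    e.hom ≫ Spec.map (CommRingCat.ofHom (algebraMap k (Polynomial k))) = A.str

/-- `A` is affine `r`-space `𝔸^r` over `k`. -/
def IsAffSpace (r : ℕ) (A : Variety k) : Prop :=
  ∃ e : A.toScheme ≅ Spec (CommRingCat.of (MvPolynomial (Fin r) k)),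
    e.hom ≫ Spec.map (CommRingCat.ofHom (algebraMap k (MvPolynomial (Fin r) k))) = A.str

/-- A variety is smooth if its structure morphism is smooth. -/
def IsSmoothVar (V : Variety k) : Prop := IsSmooth V.str

/-- Projective `N`-space over `k`, as the `Proj` of a polynomial ring. -/
def ProjSpace (k : Type u) [Field k] (N : ℕ) : Scheme.{u} :=
  letI := MvPolynomial.gradedAlgebra (σ := Fin (N + 1)) (R := k)
  Proj (MvPolynomial.homogeneousSubmodule (Fin (N + 1)) k)

/-- The structure morphism of projective `N`-space over `k`. -/
def ProjSpace.str (k : Type u) [Field k] (N : ℕ) :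
    ProjSpace k N ⟶ Spec (CommRingCat.of k) :=
  letI := MvPolynomial.gradedAlgebra (σ := Fin (N + 1)) (R := k)
  Proj.toSpecZero (MvPolynomial.homogeneousSubmodule (Fin (N + 1)) k) ≫
    Spec.map (CommRingCat.ofHom
      (algebraMap k (MvPolynomial.homogeneousSubmodule (Fin (N + 1)) k 0)))

/-- `P` is projective `N`-space over `k`, as a variety. -/
def IsProjSpaceVar (N : ℕ) (P : Variety k) : Prop :=
  ∃ e : P.toScheme ≅ ProjSpace k N, e.hom ≫ ProjSpace.str k N = P.str

/-- A variety is projective if it admits a closed immersion into some `ℙ^N` over `k`. -/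
def IsProjectiveVar (V : Variety k) : Prop :=
  ∃ (N : ℕ) (i : V.toScheme ⟶ ProjSpace k N),
    IsClosedImmersion i ∧ i ≫ ProjSpace.str k N = V.str

/-- `X` and `Y` are birationally isomorphic over `k`:
some dense open subvarieties are isomorphic over `k`. -/
def BirEquiv (X Y : Variety k) : Prop :=
  ∃ (U : X.toScheme.Opens) (V : Y.toScheme.Opens),
    Dense (U : Set X.toScheme) ∧ Dense (V : Set Y.toScheme) ∧
    ∃ e : U.toScheme ≅ V.toScheme, e.hom ≫ V.ι ≫ Y.str = U.ι ≫ X.str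

/-- `X` and `Y` are stably birational: `X × 𝔸^r` and `Y × 𝔸^r` are birationally
isomorphic for some `r ≥ 0`. -/
def StablyBirational (X Y : Variety k) : Prop :=
  ∃ (r : ℕ) (A XA YA : Variety k),
    IsAffSpace r A ∧ IsProductOf XA X A ∧ IsProductOf YA Y A ∧ BirEquiv XA YA

/-- `X` and `Y` are piecewise isomorphic: they admit finite partitions into locally
closed subvarieties which are isomorphic over `k` piece by piece. -/
def PiecewiseIso (X Y : Variety k) : Prop :=
  ∃ (m : ℕ) (P Q : Fin m → Variety k)
    (f : ∀ i, (P i).toScheme ⟶ X.toScheme) (g : ∀ i, (Q i).toScheme ⟶ Y.toScheme),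
    (∀ i, IsImmersion (f i)) ∧ (∀ i, IsImmersion (g i)) ∧
    (∀ i, f i ≫ X.str = (P i).str) ∧ (∀ i, g i ≫ Y.str = (Q i).str) ∧
    (∀ i j, i ≠ j → Disjoint (Set.range (f i).base) (Set.range (f j).base)) ∧
    (∀ i j, i ≠ j → Disjoint (Set.range (g i).base) (Set.range (g j).base)) ∧
    (⋃ i, Set.range (f i).base) = Set.univ ∧
    (⋃ i, Set.range (g i).base) = Set.univ ∧
    ∀ i, ∃ e : (P i).toScheme ≅ (Q i).toScheme, e.hom ≫ (Q i).str = (P i).str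

/-- The set of generators of the scissor-type relations among varieties of the class `P`:
`[X] = [X']` for `X ≅ X'` over `k`, and `[X] = [Y] + [U]` whenever `Y` is a closed
subvariety of `X` and `U` is its open complement. -/
def cutRel (P : Variety k → Prop) : Set (FreeAbelianGroup {V : Variety k // P V}) :=
  {a | (∃ X Y : {V : Variety k // P V},
          (∃ e : X.1.toScheme ≅ Y.1.toScheme, e.hom ≫ Y.1.str = X.1.str) ∧
          a = FreeAbelianGroup.of X - FreeAbelianGroup.of Y) ∨
       (∃ (X Y U : {V : Variety k // P V}) (i : Y.1.toScheme ⟶ X.1.toScheme)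
          (j : U.1.toScheme ⟶ X.1.toScheme),
          IsClosedImmersion i ∧ IsOpenImmersion j ∧
          i ≫ X.1.str = Y.1.str ∧ j ≫ X.1.str = U.1.str ∧
          Set.range j.base = (Set.range i.base)ᶜ ∧
          a = FreeAbelianGroup.of X - FreeAbelianGroup.of Y - FreeAbelianGroup.of U)}

/-- The Grothendieck group of the class of varieties satisfying `P`: the free abelian
group on (isomorphism classes of) varieties satisfying `P`, modulo the relations
`[X] = [Y] + [X ∖ Y]` for closed subvarieties `Y` of `X`. -/
def K0 (k : Type u) [Field k] (P : Variety k → Prop) : Type (u + 1) :=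
  FreeAbelianGroup {V : Variety k // P V} ⧸ AddSubgroup.closure (cutRel P)

instance (P : Variety k → Prop) : AddCommGroup (K0 k P) :=
  QuotientAddGroup.Quotient.addCommGroup _

/-- The class of a variety in the Grothendieck group. -/
def K0.cls {P : Variety k → Prop} (V : Variety k) (hV : P V) : K0 k P :=
  QuotientAddGroup.mk (FreeAbelianGroup.of ⟨V, hV⟩)

/-- `K_0(V_k^{(n)})`: the Grothendieck group of varieties of dimension at most `n`. -/
abbrev K0le (k : Type u) [Field k] (n : ℕ) : Type (u + 1) :=
  K0 k (fun V => V.dim ≤ (n : WithBot ℕ∞))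

/-- `K_0[V_k]` (as an abelian group): the Grothendieck group of all varieties over `k`. -/
abbrev K0Var (k : Type u) [Field k] : Type (u + 1) := K0 k (fun _ => True)

/-- The class of a variety in `K_0[V_k]`. -/
def K0Var.cls (V : Variety k) : K0Var k := K0.cls V trivial

/-- `K_0(V_k^{(n,n-1)})`: the Grothendieck group of varieties of dimension at most `n`,
where moreover the class of every variety of dimension `< n` is set to `0`. -/
def K0graded (k : Type u) [Field k] (n : ℕ) : Type (u + 1) :=
  FreeAbelianGroup {V : Variety k // V.dim ≤ (n : WithBot ℕ∞)} ⧸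
    AddSubgroup.closure (cutRel (fun V => V.dim ≤ (n : WithBot ℕ∞)) ∪
      {a | ∃ X : {V : Variety k // V.dim ≤ (n : WithBot ℕ∞)},
        X.1.dim < (n : WithBot ℕ∞) ∧ a = FreeAbelianGroup.of X})

instance (n : ℕ) : AddCommGroup (K0graded k n) :=
  QuotientAddGroup.Quotient.addCommGroup _

/-- The class of a variety in `K_0(V_k^{(n,n-1)})`. -/
def K0graded.cls (n : ℕ) (V : Variety k) (hV : V.dim ≤ (n : WithBot ℕ∞)) : K0graded k n :=
  QuotientAddGroup.mk (FreeAbelianGroup.of ⟨V, hV⟩)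

/-- `x ∈ K_0(V_k^{(b)})` lies in the image of multiplication by `L = [𝔸¹]`, viewed as the
map `K_0(V_k^{(a)}) → K_0(V_k^{(b)})` sending `[Z]` to `[Z × 𝔸¹]`. -/
def InMulLImage (a b : ℕ) (x : K0le k b) : Prop :=
  ∃ (m : ℕ) (c : Fin m → ℤ) (Z W : Fin m → Variety k)
    (_ : ∀ i, (Z i).dim ≤ (a : WithBot ℕ∞)) (hW : ∀ i, (W i).dim ≤ (b : WithBot ℕ∞)),
    (∀ i, ∃ A : Variety k, IsAffLine A ∧ IsProductOf (W i) (Z i) A) ∧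
    x = ∑ i, c i • K0.cls (W i) (hW i)

/-- `L · χ = 0` in `K_0[V_k]`: there is a representation `χ = ∑ cᵢ [Zᵢ]` with
`∑ cᵢ [Zᵢ × 𝔸¹] = 0`. -/
def MulLZero (χ : K0Var k) : Prop :=
  ∃ (m : ℕ) (c : Fin m → ℤ) (Z W : Fin m → Variety k),
    (∀ i, ∃ A : Variety k, IsAffLine A ∧ IsProductOf (W i) (Z i) A) ∧
    χ = ∑ i, c i • K0Var.cls (Z i) ∧
    (0 : K0Var k) = ∑ i, c i • K0Var.cls (W i)

/-- The subgroup of `K_0[V_k]` of multiples of `L`, i.e. the ideal generated by `L`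
viewed as an additive subgroup. -/
def LMultiples (k : Type u) [Field k] : AddSubgroup (K0Var k) :=
  AddSubgroup.closure
    {y | ∃ (m : ℕ) (c : Fin m → ℤ) (Z W : Fin m → Variety k),
      (∀ i, ∃ A : Variety k, IsAffLine A ∧ IsProductOf (W i) (Z i) A) ∧
      y = ∑ i, c i • K0Var.cls (W i)}

/-- `Z` realizes the closed complement `X ∖ U` of the open `U ⊆ X` as a variety. -/
def IsComplementOf (Z X : Variety k) (U : X.toScheme.Opens) : Prop :=
  ∃ i : Z.toScheme ⟶ X.toScheme, IsClosedImmersion i ∧ i ≫ X.str = Z.str ∧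
    Set.range i.base = (U : Set X.toScheme)ᶜ

/-- The birational isomorphism between `n`-dimensional varieties `X ⇢ Y` represented by
an isomorphism `U → V` of open subvarieties is convenient:
`[X ∖ U] - [Y ∖ V]` lies in the image of `·L : K_0(V_k^{(n-2)}) → K_0(V_k^{(n-1)})`. -/
def ConvenientRep (n : ℕ) (X Y : Variety k) (U : X.toScheme.Opens)
    (V : Y.toScheme.Opens) : Prop :=
  ∀ (ZX ZY : Variety k) (hZX : ZX.dim ≤ ((n - 1 : ℕ) : WithBot ℕ∞))
    (hZY : ZY.dim ≤ ((n - 1 : ℕ) : WithBot ℕ∞)),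
    IsComplementOf ZX X U → IsComplementOf ZY Y V →
    InMulLImage (n - 2) (n - 1) (K0.cls ZX hZX - K0.cls ZY hZY)

/-- A field `k` is convenient if every birational isomorphism between smooth projective
varieties over `k` is convenient. -/
def ConvenientField (k : Type u) [Field k] : Prop :=
  ∀ (n : ℕ) (X Y : Variety k), IsSmoothVar X → IsSmoothVar Y →
    IsProjectiveVar X → IsProjectiveVar Y →
    IrreducibleSpace X.toScheme → IrreducibleSpace Y.toScheme →
    X.dim = (n : WithBot ℕ∞) → Y.dim = (n : WithBot ℕ∞) →
    ∀ (U : X.toScheme.Opens) (V : Y.toScheme.Opens),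
      Dense (U : Set X.toScheme) → Dense (V : Set Y.toScheme) →
      ∀ e : U.toScheme ≅ V.toScheme, e.hom ≫ V.ι ≫ Y.str = U.ι ≫ X.str →
      ConvenientRep n X Y U V

end Variety
namespace Variety

variable {k : Type u} [Field k]

/-- The type of birational isomorphism classes of irreducible `n`-dimensional
varieties over `k` (the set `B_n`). -/
def BirClass (k : Type u) [Field k] (n : ℕ) : Type (u + 1) :=
  Quot (fun X Y : {V : Variety k // IrreducibleSpace V.toScheme ∧
    V.dim = (n : WithBot ℕ∞)} => BirEquiv X.1 Y.1)

/-- The type of stable birational isomorphism classes of irreducible varieties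
over `k` (the set `SB`). -/
def StableBirClass (k : Type u) [Field k] : Type (u + 1) :=
  Quot (fun X Y : {V : Variety k // IrreducibleSpace V.toScheme} =>
    StablyBirational X.1 Y.1)

/-- The family of varieties `C` together with the closed immersions `f i` realizes
exactly the `n`-dimensional irreducible components of `X`, each exactly once. -/
def RealizesComponents (n : ℕ) (X : Variety k) (m : ℕ)
    (C : Fin m → Variety k) (f : ∀ i, (C i).toScheme ⟶ X.toScheme) : Prop :=
  (∀ i, IsClosedImmersion (f i)) ∧ (∀ i, f i ≫ X.str = (C i).str) ∧
  Function.Injective (fun i => Set.range (f i).base) ∧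
  (Set.range fun i => Set.range (f i).base) =
    {S | S ∈ irreducibleComponents X.toScheme ∧
      topologicalKrullDim S = (n : WithBot ℕ∞)}

/-- `p : E ⟶ Z` is a Zariski-locally trivial `ℙ^ℓ`-bundle: every point of `Z` has an
open neighbourhood `W` such that `p⁻¹(W)` is isomorphic over `W` to `W × ℙ^ℓ`. -/
def IsProjBundle (ℓ : ℕ) {E Z : Variety k} (p : E.toScheme ⟶ Z.toScheme) : Prop :=
  ∀ z : Z.toScheme, ∃ W : Z.toScheme.Opens, z ∈ W ∧
    ∃ e : (p ⁻¹ᵁ W).toScheme ≅ Limits.pullback (W.ι ≫ Z.str) (ProjSpace.str k ℓ),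
      e.hom ≫ Limits.pullback.fst (W.ι ≫ Z.str) (ProjSpace.str k ℓ) = p ∣_ W

/-- `X` (of dimension `d`) has stable dimensional complexity `m`: `m` is the minimal
integer such that `X` is stably birational to `X' × 𝔸^(d-m)` for some variety `X'` of
dimension `m`. -/
def HasStableDimComplexity (X : Variety k) (d m : ℕ) : Prop :=
  (∃ X' A P : Variety k, X'.dim = (m : WithBot ℕ∞) ∧ IsAffSpace (d - m) A ∧
      IsProductOf P X' A ∧ StablyBirational X P) ∧
  ∀ j < m, ¬ ∃ X' A P : Variety k, X'.dim = (j : WithBot ℕ∞) ∧ IsAffSpace (d - j) A ∧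
      IsProductOf P X' A ∧ StablyBirational X P

/-- Generators of the covering relations among smooth varieties: `[X] = ∑ᵢ [Xᵢ]`
whenever `{Xᵢ → X}` is a finite family of locally closed embeddings of smooth
varieties with pairwise disjoint images whose union is all of `X`. -/
def smCutRel (k : Type u) [Field k] :
    Set (FreeAbelianGroup {V : Variety k // IsSmoothVar V}) :=
  {a | ∃ (X : {V : Variety k // IsSmoothVar V}) (m : ℕ)
        (P : Fin m → {V : Variety k // IsSmoothVar V})
        (f : ∀ i, (P i).1.toScheme ⟶ X.1.toScheme),
        (∀ i, IsImmersion (f i)) ∧ (∀ i, f i ≫ X.1.str = (P i).1.str) ∧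
        (∀ i j, i ≠ j → Disjoint (Set.range (f i).base) (Set.range (f j).base)) ∧
        (⋃ i, Set.range (f i).base) = Set.univ ∧
        a = FreeAbelianGroup.of X - ∑ i, FreeAbelianGroup.of (P i)}

/-- `K_0(V_k^{sm})`: the Grothendieck group of smooth varieties over `k`, with the
covering relations. -/
def K0sm (k : Type u) [Field k] : Type (u + 1) :=
  FreeAbelianGroup {V : Variety k // IsSmoothVar V} ⧸ AddSubgroup.closure (smCutRel k)

instance : AddCommGroup (K0sm k) := QuotientAddGroup.Quotient.addCommGroup _

/-- The class of a smooth variety in `K_0(V_k^{sm})`. -/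
def K0sm.cls (V : Variety k) (hV : IsSmoothVar V) : K0sm k :=
  QuotientAddGroup.mk (FreeAbelianGroup.of ⟨V, hV⟩)

end Variety
namespace Variety

variable {k : Type u} [Field k]

/-- The class of a variety in `K_0(V_k^{(n)})`. -/
def K0le.cls (n : ℕ) (V : Variety k) (hV : V.dim ≤ (n : WithBot ℕ∞)) : K0le k n :=
  K0.cls V hV

end Variety

open Variety

/-!
Write `I` for the image of `L` in `K_0(V_k^{(N)})`, where `N = n - 1`. The projective space `ℙ^ℓ` is
the disjoint union of its locally closed cells `𝔸^0, …, 𝔸^ℓ`, so `[T × ℙ^ℓ] - [T]` is the sum of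
the classes `[T × 𝔸^m]` with `1 ≤ m ≤ ℓ`. If `dim (T × ℙ^ℓ) ≤ N`, each of these lies in `I`: the
class `[T × 𝔸^m]` is `L` times `[T × 𝔸^{m-1}]`, and `dim (T × 𝔸^{m-1}) ≤ N - 1` because
`dim S + 1 ≤ dim (S × 𝔸^1)` for every `S`. For a bundle `p : E → Z` that is only locally trivial,
`W ↦ [W] - [p⁻¹ W]` satisfies inclusion-exclusion on the open subsets of `Z` and takes values in `I`
on all small ones; since `Z` is compact, `[Z] - [E]` lies in `I`.
-/

section Topology

open Topology TopologicalSpace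

theorem topologicalKrullDim_le_of_isOpenEmbedding {ι X : Type*} [TopologicalSpace X]
    {U : ι → Type*} [∀ i, TopologicalSpace (U i)] {f : ∀ i, U i → X}
    (hf : ∀ i, IsOpenEmbedding (f i)) (hcover : ∀ x, ∃ i, x ∈ Set.range (f i)) {d : WithBot ℕ∞}
    (hd : ∀ i, topologicalKrullDim (U i) ≤ d) : topologicalKrullDim X ≤ d := by
  rw [topologicalKrullDim, Order.krullDim_eq_iSup_coheight]
  refine iSup_le fun Z ↦ ?_
  obtain ⟨x, hx⟩ := Z.isIrreducible.nonempty
  obtain ⟨i, y, rfl⟩ := hcover x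
  let V : IrreducibleCloseds (U i) :=
    (IrreducibleCloseds.orderIsoOfIsOpenEmbedding (f i) (hf i)).symm ⟨Z, y, hx⟩
  have hV : IrreducibleCloseds.map (f i) (hf i).continuous V = Z :=
    congrArg Subtype.val <|
      (IrreducibleCloseds.orderIsoOfIsOpenEmbedding (f i) (hf i)).apply_symm_apply ⟨Z, y, hx⟩
  rw [← hV, (hf i).coheight_map]
  exact (Order.coheight_le_krullDim V).trans (hd i)

theorem apply_top_mem_of_sup_of_forall_exists_nhds {X G : Type*} [TopologicalSpace X]
    [CompactSpace X] [AddCommGroup G] (H : AddSubgroup G) (f : Opens X → G) (hbot : f ⊥ ∈ H)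
    (hsup : ∀ O W, f (O ⊔ W) = f O + f W - f (O ⊓ W))
    (hloc : ∀ x, ∃ W : Opens X, x ∈ W ∧ ∀ W' ≤ W, f W' ∈ H) : f ⊤ ∈ H := by
  suffices ∃ O : Opens X, Set.univ ⊆ (O : Set X) ∧ ∀ W ≤ O, f W ∈ H by
    obtain ⟨O, hO, hf⟩ := this
    exact hf ⊤ hO
  refine isCompact_univ.induction_on (p := fun s : Set X ↦ ∃ O : Opens X, s ⊆ O ∧ ∀ W ≤ O, f W ∈ H)
    ⟨⊥, Set.empty_subset _, fun W hW ↦ le_bot_iff.1 hW ▸ hbot⟩ ?_ ?_ ?_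
  · rintro s t hst ⟨O, hO, hf⟩
    exact ⟨O, hst.trans hO, hf⟩
  · rintro s t ⟨O, hsO, hfO⟩ ⟨O', htO', hfO'⟩
    refine ⟨O ⊔ O', Set.union_subset_union hsO htO', fun W hW ↦ ?_⟩
    have hcover : W = W ⊓ O ⊔ W ⊓ O' := by rw [← inf_sup_left, inf_eq_left.2 hW]
    rw [hcover, hsup]
    exact sub_mem (add_mem (hfO _ inf_le_right) (hfO' _ inf_le_right))
      (hfO _ (inf_le_left.trans inf_le_right))
  · intro x _
    obtain ⟨W, hxW, hf⟩ := hloc x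
    exact ⟨W, mem_nhdsWithin_of_mem_nhds (W.isOpen.mem_nhds hxW), W, subset_rfl, hf⟩

end Topology

section Immersions

open TopologicalSpace

instance isReduced_subscheme_vanishingIdeal {X : Scheme.{u}} (Z : Closeds X) :
    AlgebraicGeometry.IsReduced (Scheme.IdealSheafData.vanishingIdeal Z).subscheme := by
  set I := Scheme.IdealSheafData.vanishingIdeal Z with hI
  have : ∀ i, AlgebraicGeometry.IsReduced (I.subschemeCover.openCover.X i) := by
    intro (i : X.affineOpens)
    have : _root_.IsReduced (Γ(X, i) ⧸ I.ideal i) := by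
      rw [← Ideal.isRadical_iff_quotient_reduced, hI, Scheme.IdealSheafData.vanishingIdeal_ideal]
      exact PrimeSpectrum.isRadical_vanishingIdeal _
    exact inferInstanceAs (AlgebraicGeometry.IsReduced (Spec (.of (Γ(X, i) ⧸ I.ideal i))))
  exact AlgebraicGeometry.IsReduced.of_openCover _ I.subschemeCover.openCover

theorem exists_isClosedImmersion_lift {X C : Scheme.{u}} (i : C ⟶ X) [IsImmersion i]
    {O W : X.Opens} (hi : Set.range i = (W : Set X) \ O) :
    ∃ j : C ⟶ W, IsClosedImmersion j ∧ j ≫ W.ι = i ∧ Set.range j = (W.ι ⁻¹ᵁ O : Set W)ᶜ := by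
  have hiW : Set.range i ⊆ Set.range W.ι := by
    rw [hi, Scheme.Opens.range_ι]
    exact Set.sdiff_subset
  let j := IsOpenImmersion.lift W.ι i hiW
  have hj : j ≫ W.ι = i := IsOpenImmersion.lift_fac ..
  have : IsImmersion (j ≫ W.ι) := hj ▸ ‹_›
  have : IsImmersion j := .of_comp j W.ι
  have hrange : Set.range j = (W.ι ⁻¹ᵁ O : Set W)ᶜ := by
    rw [← W.ι.isOpenEmbedding.injective.preimage_image (Set.range j), ← Set.range_comp]
    change W.ι ⁻¹' Set.range (j ≫ W.ι) = _
    rw [hj, hi, Set.preimage_sdiff, ← Scheme.Opens.range_ι, Set.preimage_range,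
      ← Set.compl_eq_univ_sdiff]
    rfl
  exact ⟨j, .of_isPreimmersion j (hrange ▸ (W.ι ⁻¹ᵁ O).isOpen.isClosed_compl), hj, hrange⟩

end Immersions

section AffineSpace

theorem topologicalKrullDim_le_of_affineSpace_le (σ : Type u) [Finite σ] {S : Scheme.{u}}
    {d : WithBot ℕ∞} (h : topologicalKrullDim 𝔸(σ; S) ≤ d + Nat.card σ) :
    topologicalKrullDim S ≤ d := by
  refine topologicalKrullDim_le_of_isOpenEmbedding (fun i ↦ (S.affineCover.f i).isOpenEmbedding)
    (fun x ↦ ⟨_, S.affineCover.covers x⟩) fun i ↦ ?_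
  obtain ⟨R, hR⟩ : ∃ R, S.affineCover.X i = Spec R := ⟨_, rfl⟩
  have : IsOpenImmersion (AffineSpace.map σ (S.affineCover.f i)) :=
    MorphismProperty.of_isPullback (AffineSpace.isPullback_map _).flip inferInstance
  have hmap : topologicalKrullDim 𝔸(σ; S.affineCover.X i) ≤ topologicalKrullDim 𝔸(σ; S) :=
    (AffineSpace.map σ (S.affineCover.f i)).isOpenEmbedding.isInducing.topologicalKrullDim_le
  rw [hR] at hmap ⊢
  have hSpec : topologicalKrullDim 𝔸(σ; Spec R) = ringKrullDim (MvPolynomial σ R) := by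
    rw [← PrimeSpectrum.topologicalKrullDim_eq_ringKrullDim]
    exact (AffineSpace.SpecIso σ R).hom.homeomorph.isHomeomorph.topologicalKrullDim_eq
  rw [← ENat.WithBot.add_le_add_natCast_right_iff (c := Nat.card σ)]
  calc topologicalKrullDim (Spec R) + Nat.card σ
    _ = ringKrullDim R + Nat.card σ :=
      congrArg (· + _) (PrimeSpectrum.topologicalKrullDim_eq_ringKrullDim (R := R))
    _ ≤ ringKrullDim (MvPolynomial σ R) :=
      ringKrullDim_add_natCard_le_ringKrullDim_mvPolynomial σ
    _ ≤ d + Nat.card σ := hSpec ▸ hmap.trans h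

/-- The isomorphism `𝔸^ρ_S ≅ 𝔸^τ_{𝔸^σ_S}` splitting the coordinates along `ρ ≃ σ ⊕ τ`. -/
def affineSpaceSumIso {σ τ ρ : Type u} (e : σ ⊕ τ ≃ ρ) (S : Scheme.{u}) :
    𝔸(ρ; S) ≅ 𝔸(τ; 𝔸(σ; S)) where
  hom := AffineSpace.homOfVector (AffineSpace.reindex (e ∘ Sum.inl) S)
    (AffineSpace.coord S ∘ e ∘ Sum.inr)
  inv := AffineSpace.homOfVector (𝔸(τ; 𝔸(σ; S)) ↘ 𝔸(σ; S) ≫ 𝔸(σ; S) ↘ S)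
    (Sum.elim ((𝔸(τ; 𝔸(σ; S)) ↘ 𝔸(σ; S)).appTop ∘ AffineSpace.coord S)
      (AffineSpace.coord 𝔸(σ; S)) ∘ e.symm)
  hom_inv_id := by
    refine AffineSpace.hom_ext ?_ fun i ↦ ?_
    · rw [Category.assoc, AffineSpace.homOfVector_over, AffineSpace.homOfVector_over_assoc,
        AffineSpace.reindex_over, Category.id_comp]
    · rw [Scheme.Hom.comp_appTop, CommRingCat.comp_apply, AffineSpace.homOfVector_appTop_coord]
      obtain ⟨i | i, rfl⟩ := e.surjective i
      · rw [Function.comp_apply, Equiv.symm_apply_apply, Sum.elim_inl, Function.comp_apply,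
          ← CommRingCat.comp_apply, ← Scheme.Hom.comp_appTop, AffineSpace.homOfVector_over,
          AffineSpace.reindex_appTop_coord]
        rfl
      · rw [Function.comp_apply, Equiv.symm_apply_apply, Sum.elim_inr,
          AffineSpace.homOfVector_appTop_coord]
        rfl
  inv_hom_id := by
    refine AffineSpace.hom_ext (AffineSpace.hom_ext ?_ fun i ↦ ?_) fun i ↦ ?_
    · rw [Category.assoc, Category.assoc, AffineSpace.homOfVector_over_assoc,
        AffineSpace.reindex_over, AffineSpace.homOfVector_over, Category.id_comp]
    · rw [Category.assoc, AffineSpace.homOfVector_over, Scheme.Hom.comp_appTop,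
        CommRingCat.comp_apply, AffineSpace.reindex_appTop_coord,
        AffineSpace.homOfVector_appTop_coord, Category.id_comp]
      simp
    · rw [Scheme.Hom.comp_appTop, CommRingCat.comp_apply, AffineSpace.homOfVector_appTop_coord,
        Function.comp_apply, AffineSpace.homOfVector_appTop_coord]
      simp

theorem affineSpaceSumIso_hom_over {σ τ ρ : Type u} (e : σ ⊕ τ ≃ ρ) (S : Scheme.{u}) :
    (affineSpaceSumIso e S).hom ≫ 𝔸(τ; 𝔸(σ; S)) ↘ 𝔸(σ; S) ≫ 𝔸(σ; S) ↘ S = 𝔸(ρ; S) ↘ S := by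
  rw [affineSpaceSumIso, AffineSpace.homOfVector_over_assoc, AffineSpace.reindex_over]

end AffineSpace

section Dehomogenization

open HomogeneousLocalization MvPolynomial

attribute [local instance] MvPolynomial.gradedAlgebra

theorem adjoin_away_eq_top {A τ : Type*} [CommRing A] [SetLike τ A] [AddSubgroupClass τ A]
    (𝒜 : ℕ → τ) [GradedRing 𝒜] {ι : Type*} [Finite ι] {f : A} (hf : f ∈ 𝒜 1) {v : ι → A}
    (hv : ∀ i, v i ∈ 𝒜 1) (htop : Algebra.adjoin (𝒜 0) (Set.range v) = ⊤) :
    Algebra.adjoin (𝒜 0) (Set.range fun i ↦ Away.isLocalizationElem hf (hv i)) = ⊤ := by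
  have := Fintype.ofFinite ι
  rw [← top_le_iff, ← Away.adjoin_mk_prod_pow_eq_top hf ι v htop (fun _ ↦ 1) hv,
    Algebra.adjoin_le_iff]
  rintro _ ⟨n, a, ha, -, rfl⟩
  have hprod : Away.mk 𝒜 hf n (∏ i, v i ^ a i)
      (ha ▸ SetLike.prod_pow_mem_graded _ _ _ _ fun i _ ↦ hv i) =
      ∏ i, Away.isLocalizationElem hf (hv i) ^ a i := by
    apply HomogeneousLocalization.val_injective
    change _ = algebraMap (Away 𝒜 f) (Localization.Away f) _
    have hval (i : ι) :
        algebraMap (Away 𝒜 f) (Localization.Away f) (Away.isLocalizationElem hf (hv i)) =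
          Localization.mk (v i) ⟨f, Submonoid.mem_powers f⟩ := by
      simp [HomogeneousLocalization.algebraMap_apply]
    simp only [map_prod, map_pow, hval, Localization.mk_pow, Localization.mk_prod, Away.val_mk]
    congr 1
    ext
    simp_all [Finset.prod_pow_eq_pow_sum]
  rw [hprod]
  exact prod_mem fun i _ ↦ pow_mem (Algebra.subset_adjoin (Set.mem_range_self i)) _

variable {σ R S : Type*} [CommRing R] [CommRing S]

theorem X_mem_homogeneousSubmodule (i : σ) :
    (X i : MvPolynomial σ R) ∈ homogeneousSubmodule σ R 1 :=
  isHomogeneous_X R i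

theorem adjoin_homogeneousSubmodule_zero_range_X :
    Algebra.adjoin (homogeneousSubmodule σ R 0) (Set.range (X : σ → MvPolynomial σ R)) = ⊤ := by
  refine top_le_iff.1 fun x _ ↦ ?_
  induction x using MvPolynomial.induction_on with
  | C r =>
    exact Subalgebra.algebraMap_mem _ (⟨C r, isHomogeneous_C σ r⟩ : homogeneousSubmodule σ R 0)
  | add x y hx hy => exact add_mem (hx trivial) (hy trivial)
  | mul_X x i hx => exact mul_mem (hx trivial) (Algebra.subset_adjoin (Set.mem_range_self i))

variable (R) in
/-- The coordinate ring of the chart `X_m ≠ 0` of projective space, i.e. the degree `0` part of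
`R[X_i]_{X_m}`. -/
abbrev ChartRing (m : σ) : Type _ :=
  Away (homogeneousSubmodule σ R) (X m : MvPolynomial σ R)

variable (R) in
/-- The inclusion of the constants in the coordinate ring of a chart. -/
def chartC (m : σ) : R →+* ChartRing R m :=
  (fromZeroRingHom (homogeneousSubmodule σ R) _).comp (algebraMap R (homogeneousSubmodule σ R 0))

variable (R) in
/-- The coordinate `X_i / X_m` on the chart `X_m ≠ 0`. -/
def chartCoord (m i : σ) : ChartRing R m :=
  Away.isLocalizationElem (X_mem_homogeneousSubmodule m) (X_mem_homogeneousSubmodule i)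

theorem chartCoord_self (m : σ) : chartCoord R m m = 1 := by
  apply HomogeneousLocalization.val_injective
  rw [chartCoord, Away.isLocalizationElem, Away.val_mk, HomogeneousLocalization.val_one]
  exact Localization.mk_self (⟨X m ^ 1, 1, rfl⟩ : Submonoid.powers (X m : MvPolynomial σ R))

theorem chartRing_ringHom_ext [Finite σ] {m : σ} {φ ψ : ChartRing R m →+* S}
    (hC : φ.comp (chartC R m) = ψ.comp (chartC R m))
    (hX : ∀ i, φ (chartCoord R m i) = ψ (chartCoord R m i)) : φ = ψ := by
  have htop := adjoin_away_eq_top (homogeneousSubmodule σ R) (X_mem_homogeneousSubmodule m)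
    X_mem_homogeneousSubmodule adjoin_homogeneousSubmodule_zero_range_X
  refine RingHom.ext fun x ↦ ?_
  have hx : x ∈ Algebra.adjoin (homogeneousSubmodule σ R 0) (Set.range (chartCoord R m)) :=
    htop ▸ Algebra.mem_top
  induction hx using Algebra.adjoin_induction with
  | mem _ hx =>
    obtain ⟨i, rfl⟩ := hx
    exact hX i
  | algebraMap r =>
    obtain ⟨r, rfl⟩ : ∃ s, algebraMap R (homogeneousSubmodule σ R 0) s = r := by
      obtain ⟨s, hs⟩ := Submodule.mem_one.1 ((homogeneousSubmodule_zero (R := R) σ).le r.2)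
      exact ⟨s, Subtype.ext hs⟩
    exact DFunLike.congr_fun hC r
  | add x y _ _ hx hy => rw [map_add, map_add, hx, hy]
  | mul x y _ _ hx hy => rw [map_mul, map_mul, hx, hy]

/-- Evaluation of functions on the chart `X_m ≠ 0` at the point with homogeneous coordinates `v`,
normalized by `v m = 1`. -/
def chartEval (g : R →+* S) (v : σ → S) {m : σ} (hv : v m = 1) : ChartRing R m →+* S :=
  (Localization.awayLift (eval₂Hom g v) (X m) (by simp [hv])).comp
    (algebraMap (ChartRing R m) (Localization.Away (X m : MvPolynomial σ R)))

section

variable (g : R →+* S) (v : σ → S) {m : σ} (hv : v m = 1)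

theorem chartEval_chartC (r : R) : chartEval g v hv (chartC R m r) = g r := by
  have h := Localization.awayLift_mk (eval₂Hom g v) (X m) (C r) 1 (by simp [hv]) 0
  simp only [eval₂Hom_C, mul_one, one_pow] at h
  exact h

theorem chartEval_chartCoord (i : σ) : chartEval g v hv (chartCoord R m i) = v i := by
  have h := Localization.awayLift_mk (eval₂Hom g v) (X m) (X i) 1 (by simp [hv]) 1
  simpa [chartEval, chartCoord, HomogeneousLocalization.algebraMap_apply] using h

end

end Dehomogenization

namespace Variety

open TopologicalSpace

variable {k : Type u} [Field k]

instance (V : Variety k) : IsReduced V.toScheme := V.reduced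
instance (V : Variety k) : IsSeparated V.str := V.separated
instance (V : Variety k) : LocallyOfFiniteType V.str := V.locallyOfFiniteType
instance (V : Variety k) : QuasiCompact V.str := V.quasiCompact

instance (V : Variety k) : IsLocallyNoetherian V.toScheme :=
  LocallyOfFiniteType.isLocallyNoetherian V.str

instance (V : Variety k) : CompactSpace V.toScheme :=
  QuasiCompact.compactSpace_of_compactSpace V.str

theorem dim_le_of_isImmersion {C X : Variety k} (i : C.toScheme ⟶ X.toScheme) [IsImmersion i] :
    C.dim ≤ X.dim :=
  i.isEmbedding.isInducing.topologicalKrullDim_le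

theorem IsProductOf.of_isPullback {W X Y : Variety k} {p : W.toScheme ⟶ X.toScheme}
    {q : W.toScheme ⟶ Y.toScheme} (h : IsPullback p q X.str Y.str) (hp : p ≫ X.str = W.str) :
    IsProductOf W X Y :=
  ⟨h.isoPullback, by rw [h.isoPullback_hom_fst_assoc, hp]⟩

/-- The open subvariety of `X` with underlying open subscheme `O`. -/
abbrev restrict (X : Variety k) (O : X.toScheme.Opens) : Variety k where
  toScheme := O
  str := O.ι ≫ X.str
  reduced := inferInstance
  separated := inferInstance
  locallyOfFiniteType := inferInstance
  quasiCompact := inferInstance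

theorem dim_restrict_le (X : Variety k) (O : X.toScheme.Opens) : (X.restrict O).dim ≤ X.dim :=
  dim_le_of_isImmersion (C := X.restrict O) O.ι

/-- The closed subset `Z` of `X` with its reduced subscheme structure, as a variety. -/
abbrev closedSubvariety (X : Variety k) (Z : Closeds X.toScheme) : Variety k where
  toScheme := (Scheme.IdealSheafData.vanishingIdeal Z).subscheme
  str := (Scheme.IdealSheafData.vanishingIdeal Z).subschemeι ≫ X.str
  reduced := inferInstance
  separated := inferInstance
  locallyOfFiniteType := inferInstance
  quasiCompact := inferInstance

theorem exists_isImmersion_range_eq_diff (X : Variety k) (O W : X.toScheme.Opens) :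
    ∃ (C : Variety k) (i : C.toScheme ⟶ X.toScheme), IsImmersion i ∧ i ≫ X.str = C.str ∧
      Set.range i = (W : Set X.toScheme) \ O := by
  let Z : Closeds X.toScheme := O.compl
  let ι := (Scheme.IdealSheafData.vanishingIdeal Z).subschemeι
  refine ⟨(X.closedSubvariety Z).restrict (ι ⁻¹ᵁ W), (ι ⁻¹ᵁ W).ι ≫ ι, inferInstance,
    Category.assoc _ _ _, ?_⟩
  calc Set.range ((ι ⁻¹ᵁ W).ι ≫ ι) = ι '' (ι ⁻¹' W) := by
        rw [Scheme.Hom.comp_base, TopCat.coe_comp, Set.range_comp, Scheme.Opens.range_ι]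
        rfl
    _ = (W : Set X.toScheme) ∩ Set.range ι := Set.image_preimage_eq_inter_range
    _ = (W : Set X.toScheme) \ O := by
        rw [Scheme.IdealSheafData.range_subschemeι,
          Scheme.IdealSheafData.coe_support_vanishingIdeal]
        rfl

section Relations

variable {P : Variety k → Prop} {X Y U : Variety k}

theorem K0.cls_eq_of_iso (hX : P X) (hY : P Y) (e : X.toScheme ≅ Y.toScheme)
    (he : e.hom ≫ Y.str = X.str) : K0.cls X hX = K0.cls Y hY :=
  QuotientAddGroup.eq_iff_sub_mem.2 <|
    AddSubgroup.subset_closure <| .inl ⟨⟨X, hX⟩, ⟨Y, hY⟩, ⟨e, he⟩, rfl⟩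

theorem K0.cls_eq_add (hX : P X) (hY : P Y) (hU : P U) (i : Y.toScheme ⟶ X.toScheme)
    (j : U.toScheme ⟶ X.toScheme) [IsClosedImmersion i] [IsOpenImmersion j]
    (hi : i ≫ X.str = Y.str) (hj : j ≫ X.str = U.str) (hij : Set.range j = (Set.range i)ᶜ) :
    K0.cls X hX = K0.cls Y hY + K0.cls U hU := by
  rw [← sub_eq_zero, ← sub_sub]
  exact (QuotientAddGroup.eq_zero_iff _).2 <| AddSubgroup.subset_closure <|
    .inr ⟨⟨X, hX⟩, ⟨Y, hY⟩, ⟨U, hU⟩, i, j, ‹_›, ‹_›, hi, hj, hij, rfl⟩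

theorem K0.cls_of_isEmpty (hX : P X) [IsEmpty X.toScheme] : K0.cls X hX = 0 :=
  left_eq_add.1 <| K0.cls_eq_add hX hX hX (𝟙 _) (𝟙 _) (by simp) (by simp)
    (Subsingleton.elim _ _)

end Relations

section OpenClass

variable {n : ℕ} {X : Variety k} (hX : X.dim ≤ n)

/-- The class in `K_0(V_k^{(n)})` of the open subvariety of `X` supported on `O`. -/
def openCls (O : X.toScheme.Opens) : K0le k n :=
  K0le.cls n (X.restrict O) ((X.dim_restrict_le O).trans hX)

theorem openCls_top : openCls hX ⊤ = K0le.cls n X hX :=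
  K0.cls_eq_of_iso (X := X.restrict ⊤) _ _ X.toScheme.topIso (by simp)

theorem openCls_bot : openCls hX ⊥ = 0 :=
  have : IsEmpty (X.restrict ⊥).toScheme := ⟨fun x ↦ x.2⟩
  K0.cls_of_isEmpty _

theorem openCls_eq_add_of_range_eq_diff {C : Variety k} (hC : C.dim ≤ n)
    {O W : X.toScheme.Opens} (hOW : O ≤ W) (i : C.toScheme ⟶ X.toScheme) [IsImmersion i]
    (hi : i ≫ X.str = C.str) (hrange : Set.range i = (W : Set X.toScheme) \ O) :
    openCls hX W = K0le.cls n C hC + openCls hX O := by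
  obtain ⟨j, _, hj, hjrange⟩ := exists_isClosedImmersion_lift i hrange
  refine K0.cls_eq_add (X := X.restrict W) (U := X.restrict O) _ _ _ j
    (X.toScheme.homOfLE hOW) (by rw [reassoc_of% hj, hi]) (by simp) ?_
  rw [hjrange, compl_compl]
  exact congrArg SetLike.coe (Scheme.opensRange_homOfLE hOW)

theorem openCls_sup (O W : X.toScheme.Opens) :
    openCls hX (O ⊔ W) = openCls hX O + openCls hX W - openCls hX (O ⊓ W) := by
  obtain ⟨C, i, _, hi, hrange⟩ := X.exists_isImmersion_range_eq_diff O W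
  have hC : C.dim ≤ n := (dim_le_of_isImmersion i).trans hX
  have hsup : openCls hX (O ⊔ W) = K0le.cls n C hC + openCls hX O :=
    openCls_eq_add_of_range_eq_diff hX hC le_sup_left i hi (by simp [hrange])
  have hW : openCls hX W = K0le.cls n C hC + openCls hX (O ⊓ W) :=
    openCls_eq_add_of_range_eq_diff hX hC inf_le_right i hi (by simp [hrange])
  rw [hsup, hW]
  abel

theorem cls_eq_sum_of_filtration {r : ℕ} (O : ℕ → X.toScheme.Opens) (hO : Antitone O)
    (hzero : O 0 = ⊤) (hlast : O r = ⊥) (C : Fin r → Variety k) (hC : ∀ m, (C m).dim ≤ n)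
    (i : ∀ m, (C m).toScheme ⟶ X.toScheme) [∀ m, IsImmersion (i m)]
    (hi : ∀ m, i m ≫ X.str = (C m).str)
    (hrange : ∀ m : Fin r, Set.range (i m) = (O m : Set X.toScheme) \ O (m + 1)) :
    K0le.cls n X hX = ∑ m, K0le.cls n (C m) (hC m) := by
  have hcell (m : Fin r) :
      K0le.cls n (C m) (hC m) = openCls hX (O m) - openCls hX (O (m + 1)) :=
    eq_sub_of_add_eq (openCls_eq_add_of_range_eq_diff hX (hC m) (hO (Nat.le_succ m))
      (i m) (hi m) (hrange m)).symm
  rw [Finset.sum_congr rfl fun m _ ↦ hcell m,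
    Fin.sum_univ_eq_sum_range (fun m ↦ openCls hX (O m) - openCls hX (O (m + 1))),
    Finset.sum_range_sub', hzero, hlast, openCls_top, openCls_bot, sub_zero]

end OpenClass

section MulL

variable (k) in
/-- The image of multiplication by `L : K_0(V_k^{(a)}) → K_0(V_k^{(b)})` as a subgroup. -/
def mulLImage (a b : ℕ) : AddSubgroup (K0le k b) :=
  AddSubgroup.closure {x | ∃ (Z W : Variety k) (_ : Z.dim ≤ a) (hW : W.dim ≤ b),
    (∃ A : Variety k, IsAffLine A ∧ IsProductOf W Z A) ∧ K0le.cls b W hW = x}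

theorem cls_mem_mulLImage {a b : ℕ} {Z W A : Variety k} (hZ : Z.dim ≤ a) (hW : W.dim ≤ b)
    (hA : IsAffLine A) (hprod : IsProductOf W Z A) : K0le.cls b W hW ∈ mulLImage k a b :=
  AddSubgroup.subset_closure ⟨Z, W, hZ, hW, ⟨A, hA, hprod⟩, rfl⟩

theorem inMulLImage_of_mem_mulLImage {a b : ℕ} {x : K0le k b} (hx : x ∈ mulLImage k a b) :
    InMulLImage a b x := by
  rw [mulLImage, ← Submodule.span_int_eq_addSubgroupClosure, Submodule.mem_toAddSubgroup,
    Submodule.mem_span_set'] at hx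
  obtain ⟨m, c, g, rfl⟩ := hx
  choose Z W hZ hW hA hcls using fun i ↦ (g i).2
  exact ⟨m, c, Z, W, hZ, hW, hA, Finset.sum_congr rfl fun i _ ↦ by rw [← hcls i]; rfl⟩

end MulL

section AffineSpace

variable (k) in
/-- `Spec k` as a variety over `k`. -/
abbrev point : Variety k where
  toScheme := Spec (.of k)
  str := 𝟙 _
  reduced := inferInstance
  separated := inferInstance
  locallyOfFiniteType := inferInstance
  quasiCompact := inferInstance

/-- The product `T × 𝔸^σ`, as affine space over `T`. -/
abbrev affineSpace (σ : Type u) [Finite σ] (T : Variety k) : Variety k where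
  toScheme := 𝔸(σ; T.toScheme)
  str := 𝔸(σ; T.toScheme) ↘ T.toScheme ≫ T.str
  reduced := inferInstance
  separated := inferInstance
  locallyOfFiniteType := inferInstance
  quasiCompact := inferInstance

theorem isAffLine_affineSpace (σ : Type u) [Unique σ] : IsAffLine (affineSpace σ (point k)) := by
  let e := (MvPolynomial.uniqueAlgEquiv k σ).symm
  refine ⟨AffineSpace.SpecIso σ (.of k) ≪≫
    Scheme.Spec.mapIso e.toRingEquiv.toCommRingCatIso.op, ?_⟩
  have hstr : (AffineSpace.SpecIso σ (.of k)).inv ≫ (affineSpace σ (point k)).str =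
      Spec.map (CommRingCat.ofHom MvPolynomial.C) := by
    rw [← AffineSpace.SpecIso_inv_over]
    exact congrArg _ (Category.comp_id _)
  rw [Iso.trans_hom, Category.assoc, ← Iso.eq_inv_comp, hstr]
  have he : e.toRingEquiv.toRingHom.comp (algebraMap k (Polynomial k)) = MvPolynomial.C :=
    RingHom.ext e.commutes
  rw [← he]
  exact (Spec.map_comp ..).symm

theorem isProductOf_affineSpace (σ : Type u) [Finite σ] (T : Variety k) :
    IsProductOf (affineSpace σ T) T (affineSpace σ (point k)) := by
  refine .of_isPullback (p := 𝔸(σ; T.toScheme) ↘ T.toScheme) (q := AffineSpace.map σ T.str) ?_ rfl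
  simpa using (AffineSpace.isPullback_map T.str).flip

theorem cls_affineSpace_mem_mulLImage (σ : Type u) [Finite σ] [Nonempty σ] (T : Variety k) {N : ℕ}
    (h : (affineSpace σ T).dim ≤ N) : K0le.cls N (affineSpace σ T) h ∈ mulLImage k (N - 1) N := by
  classical
  obtain ⟨a⟩ := ‹Nonempty σ›
  let e : {b // b ≠ a} ⊕ PUnit ≃ σ :=
    (Equiv.optionEquivSumPUnit _).symm.trans (Equiv.optionSubtypeNe a)
  let Z : Variety k := affineSpace {b // b ≠ a} T
  have hiso : (affineSpaceSumIso e T.toScheme).hom ≫ (affineSpace PUnit Z).str =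
      (affineSpace σ T).str := by
    simpa only [Category.assoc] using affineSpaceSumIso_hom_over e T.toScheme =≫ T.str
  have hW : (affineSpace PUnit Z).dim ≤ N := by
    rwa [dim, ← (affineSpaceSumIso e T.toScheme).hom.homeomorph.isHomeomorph.topologicalKrullDim_eq]
  have hZ : Z.dim ≤ (N - 1 : ℕ) := by
    refine topologicalKrullDim_le_of_affineSpace_le PUnit (hW.trans ?_)
    rw [Nat.card_unique]
    exact_mod_cast le_tsub_add
  rw [show K0le.cls N (affineSpace σ T) h = K0le.cls N (affineSpace PUnit Z) hW from
    K0.cls_eq_of_iso _ _ (affineSpaceSumIso e T.toScheme) hiso]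
  exact cls_mem_mulLImage hZ hW (isAffLine_affineSpace PUnit) (isProductOf_affineSpace PUnit Z)

theorem cls_affineSpace_of_isEmpty (σ : Type u) [IsEmpty σ] (T : Variety k) {N : ℕ}
    (h : (affineSpace σ T).dim ≤ N) (hT : T.dim ≤ N) :
    K0le.cls N (affineSpace σ T) h = K0le.cls N T hT :=
  K0.cls_eq_of_iso _ _ (asIso (𝔸(σ; T.toScheme) ↘ T.toScheme)) rfl

end AffineSpace

section Cells

open HomogeneousLocalization MvPolynomial

attribute [local instance] MvPolynomial.gradedAlgebra

variable {ℓ : ℕ}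

/-- The indices of the coordinates on the `m`-dimensional cell of `ℙ^ℓ`, which is
`{X_m ≠ 0, X_i = 0 for i > m}`. -/
abbrev CellIndex (m : Fin (ℓ + 1)) : Type u :=
  ULift.{u} {i : Fin (ℓ + 1) // i < m}

variable (k) in
/-- The homogeneous coordinates of the generic point of the `m`-dimensional cell. -/
def cellPoint (m i : Fin (ℓ + 1)) : MvPolynomial (CellIndex.{u} m) k :=
  if h : i < m then X ⟨i, h⟩ else if i = m then 1 else 0

theorem cellPoint_of_lt {m i : Fin (ℓ + 1)} (h : i < m) : cellPoint k m i = X ⟨i, h⟩ :=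
  dif_pos h

theorem cellPoint_self (m : Fin (ℓ + 1)) : cellPoint k m m = 1 := by
  simp [cellPoint]

theorem cellPoint_of_gt {m i : Fin (ℓ + 1)} (h : m < i) : cellPoint k m i = 0 := by
  simp [cellPoint, h.not_gt, h.ne']

variable (k) in
/-- Restriction of functions on the chart `X_m ≠ 0` of `ℙ^ℓ` to the `m`-dimensional cell. -/
def cellRingHom (m : Fin (ℓ + 1)) : ChartRing k m →+* MvPolynomial (CellIndex.{u} m) k :=
  chartEval C (cellPoint k m) (cellPoint_self m)

variable (k) in
/-- Extension of functions on the `m`-dimensional cell to the chart `X_m ≠ 0` of `ℙ^ℓ`, along the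
projection forgetting the last coordinates. -/
def cellExtend (m : Fin (ℓ + 1)) : MvPolynomial (CellIndex.{u} m) k →+* ChartRing k m :=
  eval₂Hom (chartC k m) fun j ↦ chartCoord k m j.down

theorem cellRingHom_cellExtend (m : Fin (ℓ + 1)) (x : MvPolynomial (CellIndex.{u} m) k) :
    cellRingHom k m (cellExtend k m x) = x := by
  suffices (cellRingHom k m).comp (cellExtend k m) = .id _ from DFunLike.congr_fun this x
  refine MvPolynomial.ringHom_ext (fun r ↦ ?_) fun j ↦ ?_
  · simp [cellRingHom, cellExtend, chartEval_chartC]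
  · simp [cellRingHom, cellExtend, chartEval_chartCoord, cellPoint_of_lt j.down.2]

theorem cellRingHom_surjective (m : Fin (ℓ + 1)) : Function.Surjective (cellRingHom k m) :=
  Function.RightInverse.surjective (cellRingHom_cellExtend m)

theorem ker_cellRingHom_le_iff {m : Fin (ℓ + 1)} {q : Ideal (ChartRing k m)} :
    RingHom.ker (cellRingHom k m) ≤ q ↔ ∀ i, m < i → chartCoord k m i ∈ q := by
  refine ⟨fun h i hi ↦ h ?_, fun h x hx ↦ ?_⟩
  · rw [RingHom.mem_ker, cellRingHom, chartEval_chartCoord, cellPoint_of_gt hi]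
  have hext : Ideal.Quotient.mk q =
      ((Ideal.Quotient.mk q).comp (cellExtend k m)).comp (cellRingHom k m) := by
    refine chartRing_ringHom_ext (RingHom.ext fun r ↦ ?_) fun i ↦ ?_
    · simp [cellRingHom, cellExtend, chartEval_chartC]
    · rw [RingHom.comp_apply, RingHom.comp_apply, cellRingHom, chartEval_chartCoord]
      rcases lt_trichotomy i m with hi | rfl | hi
      · simp [cellPoint_of_lt hi, cellExtend]
      · simp [cellPoint_self, chartCoord_self]
      · simp [cellPoint_of_gt hi, Ideal.Quotient.eq_zero_iff_mem, h i hi]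
  rw [← Ideal.Quotient.eq_zero_iff_mem, hext, RingHom.comp_apply, RingHom.mem_ker.1 hx, map_zero]

theorem mem_range_specMap_cellRingHom_iff {m : Fin (ℓ + 1)} {w : Spec (.of (ChartRing k m))} :
    w ∈ Set.range (Spec.map (CommRingCat.ofHom (cellRingHom k m))) ↔
      ∀ i, m < i → chartCoord k m i ∈ w.asIdeal := by
  rw [← ker_cellRingHom_le_iff]
  exact Set.ext_iff.1 (range_comap_of_surjective _ _ (cellRingHom_surjective m)) w

variable (k) in
/-- The standard open `X_i ≠ 0` of projective space. -/
def projOpen (i : Fin (ℓ + 1)) : (ProjSpace k ℓ).Opens :=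
  Proj.basicOpen (homogeneousSubmodule (Fin (ℓ + 1)) k) (X i)

variable (k) in
/-- The inclusion of the affine chart `X_m ≠ 0` in projective space. -/
def projChart (m : Fin (ℓ + 1)) : Spec (.of (ChartRing k m)) ⟶ ProjSpace k ℓ :=
  Proj.awayι _ (X m) (X_mem_homogeneousSubmodule m) one_pos

instance (m : Fin (ℓ + 1)) : IsOpenImmersion (projChart k m) :=
  inferInstanceAs (IsOpenImmersion (Proj.awayι _ _ (X_mem_homogeneousSubmodule m) one_pos))

theorem range_projChart (m : Fin (ℓ + 1)) : Set.range (projChart k m) = projOpen k m :=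
  congrArg SetLike.coe (Proj.opensRange_awayι _ _ (X_mem_homogeneousSubmodule m) one_pos)

theorem projChart_mem_projOpen {m i : Fin (ℓ + 1)} {w : Spec (.of (ChartRing k m))} :
    projChart k m w ∈ projOpen k i ↔ chartCoord k m i ∉ w.asIdeal :=
  SetLike.ext_iff.1 (Proj.awayι_preimage_basicOpen _ (X_mem_homogeneousSubmodule m) one_pos
    (X_mem_homogeneousSubmodule i) one_pos) w

theorem projChart_str (m : Fin (ℓ + 1)) :
    projChart k m ≫ ProjSpace.str k ℓ = Spec.map (CommRingCat.ofHom (chartC k m)) := by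
  have h := Proj.awayι_toSpecZero (homogeneousSubmodule (Fin (ℓ + 1)) k) (X m)
    (X_mem_homogeneousSubmodule m) one_pos
  refine (Category.assoc _ _ _).symm.trans ?_
  exact (h =≫ _).trans (Spec.map_comp _ _).symm

variable (k ℓ) in
/-- The open subset of `ℙ^ℓ` where some homogeneous coordinate `X_i` with `i ≥ j` is nonzero. -/
def tailOpen (j : ℕ) : (ProjSpace k ℓ).Opens :=
  ⨆ i : {i : Fin (ℓ + 1) // j ≤ i}, projOpen k i

theorem mem_tailOpen {j : ℕ} {x : ProjSpace k ℓ} :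
    x ∈ tailOpen k ℓ j ↔ ∃ i : Fin (ℓ + 1), j ≤ i ∧ x ∈ projOpen k i := by
  simp [tailOpen]

theorem tailOpen_antitone : Antitone (tailOpen k ℓ) := fun _ _ hij _ hx ↦
  let ⟨i, hi, hxi⟩ := mem_tailOpen.1 hx
  mem_tailOpen.2 ⟨i, hij.trans hi, hxi⟩

theorem tailOpen_zero : tailOpen k ℓ 0 = ⊤ := by
  have h : ⨆ i : Fin (ℓ + 1), projOpen k i = ⊤ :=
    Proj.iSup_basicOpen_eq_top' (homogeneousSubmodule (Fin (ℓ + 1)) k) X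
      (fun i ↦ ⟨1, X_mem_homogeneousSubmodule i⟩) adjoin_homogeneousSubmodule_zero_range_X
  rw [← top_le_iff, ← h]
  exact iSup_le fun i ↦ le_iSup_of_le ⟨i, Nat.zero_le _⟩ le_rfl

theorem tailOpen_last : tailOpen k ℓ (ℓ + 1) = ⊥ :=
  iSup_eq_bot.2 fun i ↦ absurd i.2 i.1.2.not_ge

theorem mem_tailOpen_diff_iff {m : Fin (ℓ + 1)} {x : ProjSpace k ℓ} :
    x ∈ (tailOpen k ℓ m : Set (ProjSpace k ℓ)) \ tailOpen k ℓ (m + 1) ↔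
      x ∈ projOpen k m ∧ ∀ i, m < i → x ∉ projOpen k i := by
  simp only [Set.mem_sdiff, SetLike.mem_coe, mem_tailOpen, not_exists, not_and,
    Nat.add_one_le_iff, Fin.val_fin_lt, Fin.val_fin_le]
  refine and_congr_left fun h ↦ ⟨fun ⟨i, hi, hx⟩ ↦ ?_, fun hx ↦ ⟨m, le_rfl, hx⟩⟩
  obtain rfl | hi := hi.eq_or_lt
  exacts [hx, absurd hx (h i hi)]

variable (k) in
/-- The `m`-dimensional cell of the standard stratification of `ℙ^ℓ`. -/
def cell (m : Fin (ℓ + 1)) : 𝔸(CellIndex.{u} m; Spec (.of k)) ⟶ ProjSpace k ℓ :=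
  (AffineSpace.SpecIso _ _).hom ≫ Spec.map (CommRingCat.ofHom (cellRingHom k m)) ≫ projChart k m

instance (m : Fin (ℓ + 1)) : IsImmersion (cell k m) := by
  have : IsClosedImmersion (Spec.map (CommRingCat.ofHom (cellRingHom k m))) :=
    .spec_of_surjective _ (cellRingHom_surjective m)
  unfold cell
  infer_instance

theorem cell_str (m : Fin (ℓ + 1)) : cell k m ≫ ProjSpace.str k ℓ = 𝔸(_; _) ↘ _ := by
  rw [cell, Category.assoc, Category.assoc, projChart_str, ← Spec.map_comp,
    ← CommRingCat.ofHom_comp, ← Iso.eq_inv_comp, AffineSpace.SpecIso_inv_over]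
  congr 2
  exact RingHom.ext (chartEval_chartC C (cellPoint k m) (cellPoint_self m))

theorem range_cell (m : Fin (ℓ + 1)) :
    Set.range (cell k m) = (tailOpen k ℓ m : Set (ProjSpace k ℓ)) \ tailOpen k ℓ (m + 1) := by
  have hcell : Set.range (cell k m) =
      projChart k m '' Set.range (Spec.map (CommRingCat.ofHom (cellRingHom k m))) := by
    rw [← Set.range_comp]
    exact (AffineSpace.SpecIso (CellIndex m) (.of k)).hom.surjective.range_comp
      ⇑(Spec.map (CommRingCat.ofHom (cellRingHom k m)) ≫ projChart k m)
  ext x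
  rw [hcell, mem_tailOpen_diff_iff]
  constructor
  · rintro ⟨w, hw, rfl⟩
    rw [mem_range_specMap_cellRingHom_iff] at hw
    simpa [projChart_mem_projOpen, chartCoord_self, w.isPrime.one_notMem] using hw
  · rintro ⟨hm, h⟩
    rw [← SetLike.mem_coe, ← range_projChart] at hm
    obtain ⟨w, rfl⟩ := hm
    refine ⟨w, mem_range_specMap_cellRingHom_iff.2 fun i hi ↦ ?_, rfl⟩
    simpa [projChart_mem_projOpen] using h i hi

end Cells

section TrivialBundle

variable {ℓ : ℕ} {T P : Variety k} {p : P.toScheme ⟶ T.toScheme}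
  {q : P.toScheme ⟶ ProjSpace k ℓ}

theorem exists_isImmersion_range_eq_preimage_cell
    (h : IsPullback p q T.str (ProjSpace.str k ℓ)) (hp : p ≫ T.str = P.str) (m : Fin (ℓ + 1)) :
    ∃ i : (affineSpace (CellIndex m) T).toScheme ⟶ P.toScheme, IsImmersion i ∧
      i ≫ P.str = (affineSpace (CellIndex m) T).str ∧ Set.range i = q ⁻¹' Set.range (cell k m) := by
  have hcell := (AffineSpace.isPullback_map (n := CellIndex m) T.str).flip
  rw [← cell_str] at hcell
  have hpull := (IsPullback.of_right' hcell h).flip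
  refine ⟨_, MorphismProperty.of_isPullback (P := @IsImmersion) hpull inferInstance, ?_, ?_⟩
  · rw [← hp, IsPullback.lift_fst_assoc]
  · simpa using Scheme.image_preimage_eq_of_isPullback hpull Set.univ

theorem cls_sub_cls_mem_mulLImage_of_isPullback (h : IsPullback p q T.str (ProjSpace.str k ℓ))
    (hp : p ≫ T.str = P.str) {N : ℕ} (hT : T.dim ≤ N) (hP : P.dim ≤ N) :
    K0le.cls N T hT - K0le.cls N P hP ∈ mulLImage k (N - 1) N := by
  choose i hi histr hrange using exists_isImmersion_range_eq_preimage_cell h hp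
  have hdim (m : Fin (ℓ + 1)) : (affineSpace (CellIndex m) T).dim ≤ N :=
    (dim_le_of_isImmersion (i m)).trans hP
  have hsum := cls_eq_sum_of_filtration hP (fun j ↦ q ⁻¹ᵁ tailOpen k ℓ j)
    (fun _ _ hij ↦ q.preimage_mono (tailOpen_antitone hij))
    (congrArg (q ⁻¹ᵁ ·) tailOpen_zero) (congrArg (q ⁻¹ᵁ ·) tailOpen_last) _ hdim i histr
    fun m ↦ by rw [hrange, range_cell]; rfl
  have : IsEmpty (CellIndex.{u} (0 : Fin (ℓ + 1))) :=
    ⟨fun j ↦ absurd j.down.2 j.down.1.zero_le.not_gt⟩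
  have (m : Fin ℓ) : Nonempty (CellIndex.{u} m.succ) := ⟨⟨0, m.succ_pos⟩⟩
  rw [hsum, Fin.sum_univ_succ, cls_affineSpace_of_isEmpty _ T _ hT, sub_add_cancel_left]
  exact neg_mem (sum_mem fun m _ ↦ cls_affineSpace_mem_mulLImage _ T _)

end TrivialBundle

section ProjBundle

variable {ℓ : ℕ} {E Z : Variety k} {p : E.toScheme ⟶ Z.toScheme}

variable (ℓ p) in
/-- `p` is a trivial `ℙ^ℓ`-bundle over the open subset `W`. -/
def IsTrivialOver (W : Z.toScheme.Opens) : Prop :=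
  ∃ q : (p ⁻¹ᵁ W).toScheme ⟶ ProjSpace k ℓ,
    IsPullback (p ∣_ W) q (W.ι ≫ Z.str) (ProjSpace.str k ℓ)

theorem IsTrivialOver.mono {O W : Z.toScheme.Opens} (h : IsTrivialOver ℓ p W) (hOW : O ≤ W) :
    IsTrivialOver ℓ p O := by
  obtain ⟨q, hq⟩ := h
  have hO := isPullback_morphismRestrict p O
  rw [← Scheme.homOfLE_ι _ hOW] at hO
  have hrestrict := (IsPullback.of_right' hO.flip (isPullback_morphismRestrict p W).flip).flip
  exact ⟨_, by simpa using hrestrict.paste_vert hq⟩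

theorem IsProjBundle.exists_isTrivialOver (h : IsProjBundle ℓ p) (z : Z.toScheme) :
    ∃ W : Z.toScheme.Opens, z ∈ W ∧ IsTrivialOver ℓ p W := by
  obtain ⟨W, hz, e, he⟩ := h z
  refine ⟨W, hz, e.hom ≫ pullback.snd _ _, ?_⟩
  exact (IsPullback.of_hasPullback (W.ι ≫ Z.str) (ProjSpace.str k ℓ)).of_iso e.symm (.refl _)
    (.refl _) (.refl _) (by simp [← he]) (by simp) (by simp) (by simp)

variable {N : ℕ} (hZ : Z.dim ≤ N) (hE : E.dim ≤ N)

theorem IsTrivialOver.openCls_sub_openCls_mem_mulLImage {W : Z.toScheme.Opens}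
    (h : IsTrivialOver ℓ p W) (hp : p ≫ Z.str = E.str) :
    openCls hZ W - openCls hE (p ⁻¹ᵁ W) ∈ mulLImage k (N - 1) N := by
  obtain ⟨q, hq⟩ := h
  exact cls_sub_cls_mem_mulLImage_of_isPullback (T := Z.restrict W) (P := E.restrict (p ⁻¹ᵁ W)) hq
    (by rw [morphismRestrict_ι_assoc, hp]) _ _

end ProjBundle

end Variety

theorem convenient_of_projBundle_complement_general (k : Type u) [Field k] (N ℓ : ℕ)
    (Z E : Variety k) (p : E.toScheme ⟶ Z.toScheme) (hp : p ≫ Z.str = E.str)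
    (hbundle : IsProjBundle ℓ p) (hZ : Z.dim ≤ N) (hE : E.dim ≤ N) :
    InMulLImage (N - 1) N (K0le.cls N Z hZ - K0le.cls N E hE) := by
  have htop := apply_top_mem_of_sup_of_forall_exists_nhds (mulLImage k (N - 1) N)
    (fun W : Z.toScheme.Opens ↦ openCls hZ W - openCls hE (p ⁻¹ᵁ W)) ?_ (fun O W ↦ ?_) fun z ↦ ?_
  · exact inMulLImage_of_mem_mulLImage (by simpa [openCls_top] using htop)
  · simp [openCls_bot]
  · rw [openCls_sup, Scheme.Hom.preimage_sup, openCls_sup, Scheme.Hom.preimage_inf]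
    abel
  · obtain ⟨W, hzW, hW⟩ := hbundle.exists_isTrivialOver z
    exact ⟨W, hzW, fun O hOW ↦ (hW.mono hOW).openCls_sub_openCls_mem_mulLImage hZ hE hp⟩

/-- If `φ : X ⇢ Y` between smooth projective `n`-dimensional varieties
is represented by `e : U ≅ V`, `Z = X ∖ U` has dimension at most `n - 1 - ℓ`, and
`E = Y ∖ V` is a Zariski-locally trivial `ℙ^ℓ`-bundle over `Z` with `ℓ ≥ 1`, then `φ` is
convenient: `[X ∖ U] - [Y ∖ V]` lies in the image of
`·L : K_0(V_k^{(n-2)}) → K_0(V_k^{(n-1)})`. -/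
theorem convenient_of_projBundle_complement (k : Type u) [Field k] (n ℓ : ℕ)
    (hℓ : 1 ≤ ℓ) (X Y : Variety k)
    (hXs : IsSmoothVar X) (hYs : IsSmoothVar Y)
    (hXp : IsProjectiveVar X) (hYp : IsProjectiveVar Y)
    (hXi : IrreducibleSpace X.toScheme) (hYi : IrreducibleSpace Y.toScheme)
    (hXd : X.dim = (n : WithBot ℕ∞)) (hYd : Y.dim = (n : WithBot ℕ∞))
    (U : X.toScheme.Opens) (V : Y.toScheme.Opens)
    (hU : Dense (U : Set X.toScheme)) (hV : Dense (V : Set Y.toScheme))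
    (e : U.toScheme ≅ V.toScheme) (he : e.hom ≫ V.ι ≫ Y.str = U.ι ≫ X.str)
    -- `Zc` realizes `X ∖ U` and `Ec` realizes `Y ∖ V`:
    (Zc Ec : Variety k) (hZc : IsComplementOf Zc X U) (hEc : IsComplementOf Ec Y V)
    (hZdim : Zc.dim ≤ ((n - 1 - ℓ : ℕ) : WithBot ℕ∞))
    -- `Ec` is a `ℙ^ℓ`-bundle over `Zc`:
    (p : Ec.toScheme ⟶ Zc.toScheme) (hp : p ≫ Zc.str = Ec.str)
    (hbundle : IsProjBundle ℓ p)
    (hZ1 : Zc.dim ≤ ((n - 1 : ℕ) : WithBot ℕ∞))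
    (hE1 : Ec.dim ≤ ((n - 1 : ℕ) : WithBot ℕ∞)) :
    InMulLImage (n - 2) (n - 1)
      (K0le.cls (n - 1) Zc hZ1 - K0le.cls (n - 1) Ec hE1) :=
  convenient_of_projBundle_complement_general k (n - 1) ℓ Zc Ec p hp hbundle hZ1 hE1
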